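/- Define Q_α(ρ,σ) = tr((σ^{(1−α)/(2α)} ρ σ^{(1−α)/(2α)})^α) for positive definite matrices ρ, σ. For α > 1, Q_α is jointly convex: Q_α((1−t)ρ₀+tρ₁, (1−t)σ₀+tσ₁) ≤ (1−t)Q_α(ρ₀,σ₀) + t Q_α(ρ₁,σ₁) for all t ∈ [0,1]. -/

import Mathlib

open Matrix ComplexOrder

/-- Functional calculus for Hermitian matrices: apply `f` to the eigenvalues. -/
noncomputable def mfun {m : Type*} [Fintype m] [DecidableEq m] (f : ℝ → ℝ)
    (A : Matrix m m ℂ) : Matrix m m ℂ :=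
  if hA : A.IsHermitian then
    (hA.eigenvectorUnitary : Matrix m m ℂ) *
      Matrix.diagonal (fun i => (f (hA.eigenvalues i) : ℂ)) *
      (star (hA.eigenvectorUnitary : Matrix m m ℂ))
  else 0

/-- Real matrix power via the functional calculus. -/
noncomputable def mpow {m : Type*} [Fintype m] [DecidableEq m]
    (A : Matrix m m ℂ) (p : ℝ) : Matrix m m ℂ :=
  mfun (fun x => x ^ p) A


section helpers
variable {m : Type*} [Fintype m] [DecidableEq m]

lemma mfun_eq_cfc (f : ℝ → ℝ) {A : Matrix m m ℂ} (hA : A.IsHermitian) : mfun f A = cfc f A := by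
  rw [hA.cfc_eq, mfun, dif_pos hA, Matrix.IsHermitian.cfc, Unitary.conjStarAlgAut_apply]
  rfl

lemma mfun_cont (f : ℝ → ℝ) (A : Matrix m m ℂ) : ContinuousOn f (spectrum ℝ A) :=
  Matrix.finite_real_spectrum.continuousOn f

lemma mfun_herm (f : ℝ → ℝ) {A : Matrix m m ℂ} (hA : A.IsHermitian) : (mfun f A).IsHermitian := by
  rw [mfun_eq_cfc f hA]
  exact cfc_predicate f A

lemma mfun_mul (f g : ℝ → ℝ) {A : Matrix m m ℂ} (hA : A.IsHermitian) :
    mfun f A * mfun g A = mfun (fun x => f x * g x) A := by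
  simp only [mfun_eq_cfc _ hA]
  rw [cfc_mul f g A (mfun_cont _ _) (mfun_cont _ _)]

lemma mfun_comp (f g : ℝ → ℝ) {A : Matrix m m ℂ} (hA : A.IsHermitian) :
    mfun g (mfun f A) = mfun (fun x => g (f x)) A := by
  rw [mfun_eq_cfc _ (mfun_herm f hA), mfun_eq_cfc _ hA, mfun_eq_cfc _ hA]
  exact (cfc_comp g f A hA ((Matrix.finite_real_spectrum.image f).continuousOn g)
    (mfun_cont _ _)).symm

lemma mfun_id {A : Matrix m m ℂ} (hA : A.IsHermitian) : mfun (fun x => x) A = A := by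
  rw [mfun_eq_cfc _ hA]
  exact cfc_id' ℝ A hA

lemma mfun_one {A : Matrix m m ℂ} (hA : A.IsHermitian) : mfun (fun _ => 1) A = 1 := by
  rw [mfun_eq_cfc _ hA]
  exact cfc_const_one ℝ A hA

lemma mfun_congr {f g : ℝ → ℝ} {A : Matrix m m ℂ} (hA : A.PosDef) (h : ∀ x, 0 < x → f x = g x) :
    mfun f A = mfun g A := by
  have hA' := hA.isHermitian
  simp only [mfun, dif_pos hA']
  congr 3
  funext i
  rw [h _ (hA.eigenvalues_pos i)]

lemma mfun_posDef {f : ℝ → ℝ} {A : Matrix m m ℂ} (hA : A.PosDef) (h : ∀ x, 0 < x → 0 < f x) :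
    (mfun f A).PosDef := by
  have hA' := hA.isHermitian
  simp only [mfun, dif_pos hA']
  have hD : (Matrix.diagonal (fun i => (f (hA'.eigenvalues i) : ℂ))).PosDef := by
    rw [Matrix.posDef_diagonal_iff]
    intro i
    exact_mod_cast h _ (hA.eigenvalues_pos i)
  refine hD.mul_mul_conjTranspose_same ?_
  rw [Matrix.vecMul_injective_iff_isUnit]
  exact (Unitary.toUnits hA'.eigenvectorUnitary).isUnit

lemma mpow_posDef {A : Matrix m m ℂ} (hA : A.PosDef) (p : ℝ) : (mpow A p).PosDef :=
  mfun_posDef hA fun _ hx => Real.rpow_pos_of_pos hx p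

lemma mpow_mul {A : Matrix m m ℂ} (hA : A.PosDef) (p q : ℝ) :
    mpow A p * mpow A q = mpow A (p + q) := by
  simp only [mpow]
  rw [mfun_mul _ _ hA.isHermitian]
  exact mfun_congr hA fun x hx => (Real.rpow_add hx p q).symm

lemma mpow_mpow {A : Matrix m m ℂ} (hA : A.PosDef) (p q : ℝ) :
    mpow (mpow A p) q = mpow A (p * q) := by
  simp only [mpow]
  rw [mfun_comp _ _ hA.isHermitian]
  exact mfun_congr hA fun x hx => (Real.rpow_mul hx.le p q).symm

lemma mpow_one {A : Matrix m m ℂ} (hA : A.PosDef) : mpow A 1 = A := by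
  simp only [mpow, Real.rpow_one]
  exact mfun_id hA.isHermitian

lemma mpow_zero {A : Matrix m m ℂ} (hA : A.PosDef) : mpow A 0 = 1 := by
  simp only [mpow, Real.rpow_zero]
  exact mfun_one hA.isHermitian

lemma mfun_trace (f : ℝ → ℝ) {A : Matrix m m ℂ} (hA : A.IsHermitian) :
    (mfun f A).trace = ∑ i, (f (hA.eigenvalues i) : ℂ) := by
  simp only [mfun, dif_pos hA]
  rw [Matrix.trace_mul_comm, ← Matrix.mul_assoc]
  simp [Matrix.trace_diagonal]

lemma mpow_trace_comm (K : Matrix m m ℂ) (r : ℝ) :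
    (mpow (Kᴴ * K) r).trace = (mpow (K * Kᴴ) r).trace := by
  have h1 : (Kᴴ * K).IsHermitian := Matrix.isHermitian_conjTranspose_mul_self K
  have h2 : (K * Kᴴ).IsHermitian := Matrix.isHermitian_mul_conjTranspose_self K
  have h3 : h1.eigenvalues = h2.eigenvalues := by
    rw [Matrix.IsHermitian.eigenvalues_eq_eigenvalues_iff]
    exact Matrix.charpoly_mul_comm _ _
  rw [mpow, mpow, mfun_trace _ h1, mfun_trace _ h2, h3]

/-- bilinear expansion coefficients -/
noncomputable def cof {A B : Matrix m m ℂ} (hA : A.IsHermitian) (hB : B.IsHermitian)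
    (K : Matrix m m ℂ) : Matrix m m ℂ :=
  star (hA.eigenvectorUnitary : Matrix m m ℂ) * K * (hB.eigenvectorUnitary : Matrix m m ℂ)

lemma trace_expand {A B : Matrix m m ℂ} (hA : A.IsHermitian) (hB : B.IsHermitian)
    (K : Matrix m m ℂ) (f g : ℝ → ℝ) :
    (Kᴴ * mfun f A * K * mfun g B).trace.re =
      ∑ i, ∑ j, ‖cof hA hB K i j‖ ^ 2 * (f (hA.eigenvalues i) * g (hB.eigenvalues j)) := by
  have : (Kᴴ * mfun f A * K * mfun g B).trace =
      ((cof hA hB K)ᴴ * Matrix.diagonal (fun i => (f (hA.eigenvalues i) : ℂ)) * cof hA hB K *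
        Matrix.diagonal (fun i => (g (hB.eigenvalues i) : ℂ))).trace := by
    simp only [mfun, dif_pos hA, dif_pos hB, cof, Matrix.conjTranspose_mul,
      Matrix.star_eq_conjTranspose, Matrix.conjTranspose_conjTranspose]
    simp only [← Matrix.mul_assoc]
    rw [Matrix.trace_mul_comm]
    simp only [← Matrix.mul_assoc]
  rw [this, Matrix.trace, Complex.re_sum, Finset.sum_comm]
  refine Finset.sum_congr rfl fun j _ => ?_
  rw [Matrix.diag_apply, Matrix.mul_diagonal, Matrix.mul_apply, Finset.sum_mul, Complex.re_sum]
  refine Finset.sum_congr rfl fun i _ => ?_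
  rw [Matrix.mul_diagonal, Matrix.conjTranspose_apply]
  rw [← Complex.ofReal_re (‖cof hA hB K i j‖ ^ 2 * _)]
  congr 1
  push_cast
  rw [← Complex.conj_mul']
  simp only [RCLike.star_def]
  ring

lemma young_trace {A B : Matrix m m ℂ} (hA : A.PosDef) (hB : B.PosDef) {r q : ℝ}
    (h : r.HolderConjugate q) :
    (A * B).trace.re ≤ (mpow A r).trace.re / r + (mpow B q).trace.re / q := by
  have e1 := trace_expand hA.isHermitian hB.isHermitian 1 (fun x => x) (fun x => x)
  have e2 := trace_expand hA.isHermitian hB.isHermitian 1 (fun x => x ^ r) (fun x => 1)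
  have e3 := trace_expand hA.isHermitian hB.isHermitian 1 (fun x => 1) (fun x => x ^ q)
  simp only [mfun_id hA.isHermitian, mfun_id hB.isHermitian, mfun_one hA.isHermitian,
    mfun_one hB.isHermitian, Matrix.conjTranspose_one, Matrix.one_mul, Matrix.mul_one] at e1 e2 e3
  rw [mpow, mpow, e1, e2, e3]
  simp only [Finset.sum_div, ← Finset.sum_add_distrib]
  refine Finset.sum_le_sum fun i _ => Finset.sum_le_sum fun j _ => ?_
  have := Real.young_inequality_of_nonneg (hA.eigenvalues_pos i).le (hB.eigenvalues_pos j).le h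
  calc _ ≤ _ := mul_le_mul_of_nonneg_left this (sq_nonneg _)
    _ = _ := by ring

/-- the parallel-sum kernel form -/
noncomputable def Gs {A B : Matrix m m ℂ} (hA : A.IsHermitian) (hB : B.IsHermitian)
    (K : Matrix m m ℂ) (s : ℝ) : ℝ :=
  ∑ i, ∑ j, ‖cof hA hB K i j‖ ^ 2 * (hA.eigenvalues i * hB.eigenvalues j /
    (s * hB.eigenvalues j + hA.eigenvalues i))

lemma par_scalar {a b s : ℝ} (ha : 0 < a) (hb : 0 < b) (hs : 0 < s) (x y : ℂ) :
    ‖x + y‖ ^ 2 * (a * b / (s * b + a)) ≤ ‖x‖ ^ 2 * b + ‖y‖ ^ 2 * a / s := by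
  have h1 : ‖x + y‖ ^ 2 ≤ (‖x‖ + ‖y‖) ^ 2 := by
    have := norm_add_le x y
    gcongr
  have hpos : 0 < s * b + a := by positivity
  calc _ ≤ (‖x‖ + ‖y‖) ^ 2 * (a * b / (s * b + a)) := by gcongr
    _ ≤ _ := by
      rw [← sub_nonneg]
      have : ‖x‖ ^ 2 * b + ‖y‖ ^ 2 * a / s - (‖x‖ + ‖y‖) ^ 2 * (a * b / (s * b + a)) =
          (s * b * ‖x‖ - a * ‖y‖) ^ 2 / (s * (s * b + a)) := by
        field_simp
        ring
      rw [this]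
      positivity

lemma expand_right {A B : Matrix m m ℂ} (hA : A.IsHermitian) (hB : B.IsHermitian)
    (X : Matrix m m ℂ) : (Xᴴ * X * B).trace.re =
      ∑ i, ∑ j, ‖cof hA hB X i j‖ ^ 2 * hB.eigenvalues j := by
  have := trace_expand hA hB X (fun _ => 1) (fun x => x)
  simpa [mfun_one hA, mfun_id hB] using this

lemma expand_left {A B : Matrix m m ℂ} (hA : A.IsHermitian) (hB : B.IsHermitian)
    (X : Matrix m m ℂ) : (Xᴴ * A * X).trace.re =
      ∑ i, ∑ j, ‖cof hA hB X i j‖ ^ 2 * hA.eigenvalues i := by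
  have := trace_expand hA hB X (fun x => x) (fun _ => 1)
  simpa [mfun_one hB, mfun_id hA] using this

lemma Gs_le {A B : Matrix m m ℂ} (hA : A.PosDef) (hB : B.PosDef) {s : ℝ} (hs : 0 < s)
    (X Y : Matrix m m ℂ) : Gs hA.isHermitian hB.isHermitian (X + Y) s ≤
      (Xᴴ * X * B).trace.re + (Yᴴ * A * Y).trace.re / s := by
  rw [expand_right hA.isHermitian hB.isHermitian X, expand_left hA.isHermitian hB.isHermitian Y, Gs]
  simp only [Finset.sum_div, ← Finset.sum_add_distrib]
  refine Finset.sum_le_sum fun i _ => Finset.sum_le_sum fun j _ => ?_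
  have : cof hA.isHermitian hB.isHermitian (X + Y) =
      cof hA.isHermitian hB.isHermitian X + cof hA.isHermitian hB.isHermitian Y := by
    simp only [cof, Matrix.mul_add, Matrix.add_mul]
  rw [this, Matrix.add_apply]
  exact par_scalar (hA.eigenvalues_pos i) (hB.eigenvalues_pos j) hs _ _

lemma cof_surj {A B : Matrix m m ℂ} (hA : A.IsHermitian) (hB : B.IsHermitian)
    (x : Matrix m m ℂ) : cof hA hB ((hA.eigenvectorUnitary : Matrix m m ℂ) * x *
      star (hB.eigenvectorUnitary : Matrix m m ℂ)) = x := by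
  have h1 : star (hA.eigenvectorUnitary : Matrix m m ℂ) * (hA.eigenvectorUnitary : Matrix m m ℂ) = 1 :=
    Unitary.coe_star_mul_self _
  have h2 : star (hB.eigenvectorUnitary : Matrix m m ℂ) * (hB.eigenvectorUnitary : Matrix m m ℂ) = 1 :=
    Unitary.coe_star_mul_self _
  simp only [cof, Matrix.mul_assoc]
  rw [h2, ← Matrix.mul_assoc, h1]
  simp

lemma cof_inv {A B : Matrix m m ℂ} (hA : A.IsHermitian) (hB : B.IsHermitian)
    (x : Matrix m m ℂ) : (hA.eigenvectorUnitary : Matrix m m ℂ) * cof hA hB x *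
      star (hB.eigenvectorUnitary : Matrix m m ℂ) = x := by
  have h1 : (hA.eigenvectorUnitary : Matrix m m ℂ) * star (hA.eigenvectorUnitary : Matrix m m ℂ) = 1 :=
    Unitary.coe_mul_star_self _
  have h2 : (hB.eigenvectorUnitary : Matrix m m ℂ) * star (hB.eigenvectorUnitary : Matrix m m ℂ) = 1 :=
    Unitary.coe_mul_star_self _
  simp only [cof, Matrix.mul_assoc]
  rw [h2, ← Matrix.mul_assoc, h1]
  simp

lemma Gs_attained {A B : Matrix m m ℂ} (hA : A.PosDef) (hB : B.PosDef) {s : ℝ} (hs : 0 < s)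
    (K : Matrix m m ℂ) : ∃ X Y, X + Y = K ∧ Gs hA.isHermitian hB.isHermitian K s =
      (Xᴴ * X * B).trace.re + (Yᴴ * A * Y).trace.re / s := by
  have hA' := hA.isHermitian
  have hB' := hB.isHermitian
  let x : Matrix m m ℂ := Matrix.of fun i j => cof hA' hB' K i j *
    ((hA'.eigenvalues i / (s * hB'.eigenvalues j + hA'.eigenvalues i) : ℝ) : ℂ)
  let y : Matrix m m ℂ := Matrix.of fun i j => cof hA' hB' K i j *
    ((s * hB'.eigenvalues j / (s * hB'.eigenvalues j + hA'.eigenvalues i) : ℝ) : ℂ)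
  refine ⟨(hA'.eigenvectorUnitary : Matrix m m ℂ) * x *
      star (hB'.eigenvectorUnitary : Matrix m m ℂ), (hA'.eigenvectorUnitary : Matrix m m ℂ) * y *
      star (hB'.eigenvectorUnitary : Matrix m m ℂ), ?_, ?_⟩
  · rw [← Matrix.add_mul, ← Matrix.mul_add]
    have : x + y = cof hA' hB' K := by
      ext i j
      have ha := hA.eigenvalues_pos i
      have hb := hB.eigenvalues_pos j
      have hpos : 0 < s * hB'.eigenvalues j + hA'.eigenvalues i := by positivity
      simp only [x, y, Matrix.add_apply, Matrix.of_apply]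
      rw [← mul_add, ← Complex.ofReal_add, ← add_div, add_comm (hA'.eigenvalues i),
        div_self hpos.ne']
      simp
    rw [this, cof_inv]
  · rw [expand_right hA' hB', expand_left hA' hB', Gs, cof_surj, cof_surj]
    simp only [Finset.sum_div, ← Finset.sum_add_distrib]
    refine Finset.sum_congr rfl fun i _ => Finset.sum_congr rfl fun j _ => ?_
    have ha := hA.eigenvalues_pos i
    have hb := hB.eigenvalues_pos j
    have hpos : 0 < s * hB'.eigenvalues j + hA'.eigenvalues i := by positivity
    simp only [x, y, Matrix.of_apply, norm_mul, Complex.norm_real, mul_pow, Real.norm_eq_abs,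
      sq_abs]
    field_simp
    ring

lemma comb_posDef {A₀ A₁ : Matrix m m ℂ} (h0 : A₀.PosDef) (h1 : A₁.PosDef) {t : ℝ}
    (ht0 : 0 ≤ t) (ht1 : t ≤ 1) :
    (((1 - t : ℝ) : ℂ) • A₀ + ((t : ℝ) : ℂ) • A₁).PosDef := by
  rcases ht0.eq_or_lt with rfl | ht
  · simpa using h0
  · have a1 : (((t : ℝ) : ℂ) • A₁).PosDef := h1.smul (by exact_mod_cast ht)
    have a0 : (((1 - t : ℝ) : ℂ) • A₀).PosSemidef := h0.posSemidef.smul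
      (by exact_mod_cast sub_nonneg.2 ht1)
    exact Matrix.PosDef.posSemidef_add a0 a1

lemma Gs_concave {A₀ A₁ B₀ B₁ A B : Matrix m m ℂ} (hA₀ : A₀.PosDef) (hA₁ : A₁.PosDef)
    (hB₀ : B₀.PosDef) (hB₁ : B₁.PosDef) (hA : A.PosDef) (hB : B.PosDef)
    {t : ℝ} (ht0 : 0 ≤ t) (ht1 : t ≤ 1)
    (eA : A = ((1 - t : ℝ) : ℂ) • A₀ + ((t : ℝ) : ℂ) • A₁)
    (eB : B = ((1 - t : ℝ) : ℂ) • B₀ + ((t : ℝ) : ℂ) • B₁)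
    (K : Matrix m m ℂ) {s : ℝ} (hs : 0 < s) :
    (1 - t) * Gs hA₀.isHermitian hB₀.isHermitian K s + t * Gs hA₁.isHermitian hB₁.isHermitian K s
      ≤ Gs hA.isHermitian hB.isHermitian K s := by
  obtain ⟨X, Y, hXY, h⟩ := Gs_attained hA hB hs K
  have e0 := Gs_le hA₀ hB₀ hs X Y
  have e1 := Gs_le hA₁ hB₁ hs X Y
  rw [hXY] at e0 e1
  have e0' := mul_le_mul_of_nonneg_left e0 (sub_nonneg.2 ht1)
  have e1' := mul_le_mul_of_nonneg_left e1 ht0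
  rw [h, eA, eB]
  simp only [Matrix.mul_add, Matrix.add_mul, Matrix.mul_smul, Matrix.smul_mul, Matrix.trace_add,
    Matrix.trace_smul, smul_eq_mul, Complex.add_re, Complex.re_ofReal_mul]
  calc _ ≤ _ := add_le_add e0' e1'
    _ = _ := by ring

open MeasureTheory Set in
lemma trace_eq_integral {p : ℝ} (hp : p ∈ Ioo 0 1) : ∃ μ : Measure ℝ,
    ∀ (A B K : Matrix m m ℂ) (hA : A.PosDef) (hB : B.PosDef),
    IntegrableOn (fun s => s ^ (p - 1) * Gs hA.isHermitian hB.isHermitian K s) (Ioi 0) μ ∧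
    (Kᴴ * mpow A p * K * mpow B (1 - p)).trace.re =
      ∫ s in Ioi 0, s ^ (p - 1) * Gs hA.isHermitian hB.isHermitian K s ∂μ := by
  obtain ⟨μ, hμ⟩ := Real.exists_measure_rpow_eq_integral_rpowIntegrand₀₁ hp
  refine ⟨μ, fun A B K hA hB => ?_⟩
  have hA' := hA.isHermitian
  have hB' := hB.isHermitian
  have key : ∀ a b : ℝ, 0 < a → 0 < b →
      IntegrableOn (fun s => s ^ (p - 1) * (a * b / (s * b + a))) (Ioi 0) μ ∧
      a ^ p * b ^ (1 - p) = ∫ s in Ioi 0, s ^ (p - 1) * (a * b / (s * b + a)) ∂μ := by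
    intro a b ha hb
    obtain ⟨i1, i2⟩ := hμ (a / b) (div_pos ha hb).le
    have heq : EqOn (fun s => b * Real.rpowIntegrand₀₁ p s (a / b))
        (fun s => s ^ (p - 1) * (a * b / (s * b + a))) (Ioi 0) := by
      intro s hs
      have hs' : 0 < s := hs
      simp only
      rw [Real.rpowIntegrand₀₁_eq_pow_div hp hs'.le (div_pos ha hb).le]
      have : 0 < s * b + a := by positivity
      field_simp
    refine ⟨IntegrableOn.congr_fun (i1.const_mul b) heq measurableSet_Ioi, ?_⟩
    rw [← setIntegral_congr_fun measurableSet_Ioi heq, integral_const_mul, ← i2,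
      Real.div_rpow ha.le hb.le, Real.rpow_sub hb, Real.rpow_one]
    ring
  have hfun : (fun s => s ^ (p - 1) * Gs hA' hB' K s) = fun s => ∑ i, ∑ j,
      ‖cof hA' hB' K i j‖ ^ 2 * (s ^ (p - 1) * (hA'.eigenvalues i * hB'.eigenvalues j /
        (s * hB'.eigenvalues j + hA'.eigenvalues i))) := by
    funext s
    simp only [Gs, Finset.mul_sum]
    refine Finset.sum_congr rfl fun i _ => Finset.sum_congr rfl fun j _ => ?_
    ring
  rw [hfun]
  have hint : ∀ i j, IntegrableOn (fun s => 
      ‖cof hA' hB' K i j‖ ^ 2 * (s ^ (p - 1) * (hA'.eigenvalues i * hB'.eigenvalues j /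
        (s * hB'.eigenvalues j + hA'.eigenvalues i)))) (Ioi 0) μ := fun i j =>
    (key _ _ (hA.eigenvalues_pos i) (hB.eigenvalues_pos j)).1.const_mul _
  constructor
  · exact integrable_finsetSum _ fun i _ => integrable_finsetSum _ fun j _ => hint i j
  · rw [integral_finsetSum _ fun i _ => integrable_finsetSum _ fun j _ => hint i j, mpow, mpow,
      trace_expand hA' hB']
    refine Finset.sum_congr rfl fun i _ => ?_
    rw [integral_finsetSum _ fun j _ => hint i j]
    refine Finset.sum_congr rfl fun j _ => ?_
    rw [integral_const_mul, (key _ _ (hA.eigenvalues_pos i) (hB.eigenvalues_pos j)).2]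

open MeasureTheory Set in
lemma lieb {A₀ A₁ B₀ B₁ A B : Matrix m m ℂ} (hA₀ : A₀.PosDef) (hA₁ : A₁.PosDef)
    (hB₀ : B₀.PosDef) (hB₁ : B₁.PosDef) (hA : A.PosDef) (hB : B.PosDef)
    {t : ℝ} (ht0 : 0 ≤ t) (ht1 : t ≤ 1)
    (eA : A = ((1 - t : ℝ) : ℂ) • A₀ + ((t : ℝ) : ℂ) • A₁)
    (eB : B = ((1 - t : ℝ) : ℂ) • B₀ + ((t : ℝ) : ℂ) • B₁)
    (K : Matrix m m ℂ) {p : ℝ} (hp : p ∈ Ioo 0 1) :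
    (1 - t) * (Kᴴ * mpow A₀ p * K * mpow B₀ (1 - p)).trace.re +
      t * (Kᴴ * mpow A₁ p * K * mpow B₁ (1 - p)).trace.re ≤
      (Kᴴ * mpow A p * K * mpow B (1 - p)).trace.re := by
  obtain ⟨μ, hμ⟩ := trace_eq_integral (m := m) hp
  obtain ⟨i0, j0⟩ := hμ A₀ B₀ K hA₀ hB₀
  obtain ⟨i1, j1⟩ := hμ A₁ B₁ K hA₁ hB₁
  obtain ⟨i, j⟩ := hμ A B K hA hB
  rw [j0, j1, j, ← integral_const_mul, ← integral_const_mul,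
    ← integral_add (i0.const_mul _) (i1.const_mul _)]
  refine setIntegral_mono_on ((i0.const_mul _).add (i1.const_mul _)) i measurableSet_Ioi ?_
  intro s hs
  have := mul_le_mul_of_nonneg_left
    (Gs_concave hA₀ hA₁ hB₀ hB₁ hA hB ht0 ht1 eA eB K (s := s) hs)
    (Real.rpow_nonneg (le_of_lt hs) (p - 1))
  refine le_trans (le_of_eq ?_) this
  ring

lemma conj_posDef {A S : Matrix m m ℂ} (hA : A.PosDef) (hS : S.PosDef) : (S * A * S).PosDef := by
  have h : Function.Injective S.vecMul :=
    Matrix.vecMul_injective_iff_isUnit.2 hS.isUnit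
  have := hA.mul_mul_conjTranspose_same h
  rwa [hS.isHermitian.eq] at this

/-- Epstein-type functional -/
noncomputable def Gf (p : ℝ) (H σ : Matrix m m ℂ) : ℝ :=
  (mpow (mpow H (1 / 2) * mpow σ p * mpow H (1 / 2)) (1 / p)).trace.re

open Set in
lemma Gf_concave {p : ℝ} (hp : p ∈ Ioo (0 : ℝ) 1) {H σ₀ σ₁ σ : Matrix m m ℂ} (hH : H.PosDef)
    (hσ₀ : σ₀.PosDef) (hσ₁ : σ₁.PosDef) (hσ : σ.PosDef) {t : ℝ} (ht0 : 0 ≤ t) (ht1 : t ≤ 1)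
    (e : σ = ((1 - t : ℝ) : ℂ) • σ₀ + ((t : ℝ) : ℂ) • σ₁) :
    (1 - t) * Gf p H σ₀ + t * Gf p H σ₁ ≤ Gf p H σ := by
  have hp0 : 0 < p := hp.1
  have hp1 : 0 < 1 - p := sub_pos.2 hp.2
  have hh := mpow_posDef hH (1 / 2)
  have hX : ∀ τ : Matrix m m ℂ, τ.PosDef → (mpow H (1 / 2) * mpow τ p * mpow H (1 / 2)).PosDef :=
    fun τ hτ => conj_posDef (mpow_posDef hτ p) hh
  -- optimal value
  have opt : ∀ τ : Matrix m m ℂ, τ.PosDef →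
      ((mpow H (1 / 2))ᴴ * mpow τ p * mpow H (1 / 2) *
        mpow (mpow (mpow H (1 / 2) * mpow τ p * mpow H (1 / 2)) (1 / p)) (1 - p)).trace.re =
      Gf p H τ := by
    intro τ hτ
    rw [hh.isHermitian.eq, mpow_mpow (hX τ hτ), Gf]
    conv_lhs => enter [1, 1, 1]; rw [← mpow_one (hX τ hτ)]
    rw [mpow_mul (hX τ hτ)]
    congr 3
    field_simp
    ring
  set Y₀ := mpow (mpow H (1 / 2) * mpow σ₀ p * mpow H (1 / 2)) (1 / p) with hY₀
  set Y₁ := mpow (mpow H (1 / 2) * mpow σ₁ p * mpow H (1 / 2)) (1 / p) with hY₁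
  have pY₀ : Y₀.PosDef := mpow_posDef (hX _ hσ₀) _
  have pY₁ : Y₁.PosDef := mpow_posDef (hX _ hσ₁) _
  have pY := comb_posDef pY₀ pY₁ ht0 ht1
  have hl := lieb hσ₀ hσ₁ pY₀ pY₁ hσ pY ht0 ht1 e rfl (mpow H (1 / 2)) hp
  rw [opt σ₀ hσ₀, opt σ₁ hσ₁, hh.isHermitian.eq] at hl
  have hconj : (1 / p).HolderConjugate (1 / (1 - p)) := by
    rw [Real.holderConjugate_iff]
    refine ⟨by rw [lt_div_iff₀ hp0]; linarith [hp.2], by simp⟩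
  have hy := young_trace (hX σ hσ) (mpow_posDef pY (1 - p)) hconj
  rw [mpow_mpow pY, mul_one_div_cancel hp1.ne', mpow_one pY] at hy
  have g0 : Y₀.trace.re = Gf p H σ₀ := rfl
  have g1 : Y₁.trace.re = Gf p H σ₁ := rfl
  simp only [Matrix.trace_add, Matrix.trace_smul, smul_eq_mul, Complex.add_re,
    Complex.re_ofReal_mul, g0, g1] at hy
  have g : (mpow (mpow H (1 / 2) * mpow σ p * mpow H (1 / 2)) (1 / p)).trace.re = Gf p H σ := rfl
  rw [g, div_div_eq_mul_div, div_div_eq_mul_div, div_one, div_one] at hy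
  have := hl.trans hy
  nlinarith

lemma pow_half_facts {σ : Matrix m m ℂ} (hσ : σ.PosDef) (p s : ℝ) (hs : s = -(p / 2)) :
    mpow σ (p / 2) * mpow σ s = 1 ∧ mpow σ s * mpow σ (p / 2) = 1 ∧
      mpow σ (p / 2) * mpow σ (p / 2) = mpow σ p := by
  subst hs
  refine ⟨?_, ?_, ?_⟩
  · rw [mpow_mul hσ, add_neg_cancel, mpow_zero hσ]
  · rw [mpow_mul hσ, neg_add_cancel, mpow_zero hσ]
  · rw [mpow_mul hσ, add_halves]

lemma Gf_eq (p : ℝ) {H σ : Matrix m m ℂ} (hH : H.PosDef) (hσ : σ.PosDef) :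
    Gf p H σ = (mpow (mpow σ (p / 2) * H * mpow σ (p / 2)) (1 / p)).trace.re := by
  have hS := (mpow_posDef hσ (p / 2)).isHermitian.eq
  have hh := (mpow_posDef hH (1 / 2)).isHermitian.eq
  have hHH : mpow H (1 / 2) * mpow H (1 / 2) = H := by
    rw [mpow_mul hH, add_halves, mpow_one hH]
  have := mpow_trace_comm (mpow σ (p / 2) * mpow H (1 / 2)) (1 / p)
  rw [Matrix.conjTranspose_mul, hS, hh] at this
  have e1 : mpow H (1 / 2) * mpow σ (p / 2) * (mpow σ (p / 2) * mpow H (1 / 2)) =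
      mpow H (1 / 2) * mpow σ p * mpow H (1 / 2) := by
    rw [← (pow_half_facts hσ p _ rfl).2.2]
    simp only [Matrix.mul_assoc]
  have e2 : mpow σ (p / 2) * mpow H (1 / 2) * (mpow H (1 / 2) * mpow σ (p / 2)) =
      mpow σ (p / 2) * H * mpow σ (p / 2) := by
    conv_rhs => rw [← hHH]
    simp only [Matrix.mul_assoc]
  rw [e1, e2] at this
  rw [Gf, this]

lemma trace_WZ {σ H ρ S T : Matrix m m ℂ} (h1 : S * T = 1) (h2 : T * S = 1) :
    ((S * H * S) * (T * ρ * T)).trace = (H * ρ).trace := by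
  have : (S * H * S) * (T * ρ * T) = S * (H * ρ * T) := by
    calc _ = S * H * (S * T) * ρ * T := by simp only [Matrix.mul_assoc]
      _ = _ := by rw [h1]; simp only [Matrix.mul_assoc, Matrix.one_mul]
  rw [this, Matrix.trace_mul_comm, Matrix.mul_assoc, h2, Matrix.mul_one]

lemma var_le {α p s : ℝ} (hα : 1 < α) (hp : p = (α - 1) / α) (hs : s = -(p / 2))
    {ρ σ H : Matrix m m ℂ} (hρ : ρ.PosDef) (hσ : σ.PosDef) (hH : H.PosDef) :
    α * (H * ρ).trace.re - (α - 1) * Gf p H σ ≤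
      (mpow (mpow σ s * ρ * mpow σ s) α).trace.re := by
  obtain ⟨h1, h2, h3⟩ := pow_half_facts hσ p s hs
  have hW := conj_posDef hH (mpow_posDef hσ (p / 2))
  have hZ := conj_posDef hρ (mpow_posDef hσ s)
  have hα0 : 0 < α := by linarith
  have hα1 : 0 < α - 1 := by linarith
  have hconj : (1 / p).HolderConjugate α := by
    rw [Real.holderConjugate_iff, hp]
    refine ⟨by rw [one_div_div, lt_div_iff₀ hα1]; linarith, ?_⟩
    field_simp
    ring
  have hy := young_trace hW hZ hconj
  rw [trace_WZ (σ := σ) h1 h2, ← Gf_eq p hH hσ, div_div_eq_mul_div, div_one, hp] at hy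
  rw [hp]
  have := mul_le_mul_of_nonneg_left hy hα0.le
  have e : α * (Gf ((α - 1) / α) H σ * ((α - 1) / α) +
      (mpow (mpow σ s * ρ * mpow σ s) α).trace.re / α) =
      (α - 1) * Gf ((α - 1) / α) H σ + (mpow (mpow σ s * ρ * mpow σ s) α).trace.re := by
    field_simp
  linarith

lemma var_eq {α p s : ℝ} (hα : 1 < α) (hp : p = (α - 1) / α) (hs : s = -(p / 2))
    {ρ σ : Matrix m m ℂ} (hρ : ρ.PosDef) (hσ : σ.PosDef) :
    ∃ H : Matrix m m ℂ, H.PosDef ∧ α * (H * ρ).trace.re - (α - 1) * Gf p H σ =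
      (mpow (mpow σ s * ρ * mpow σ s) α).trace.re := by
  obtain ⟨h1, h2, h3⟩ := pow_half_facts hσ p s hs
  have hZ := conj_posDef hρ (mpow_posDef hσ s)
  set Z := mpow σ s * ρ * mpow σ s with hZdef
  have hα0 : 0 < α := by linarith
  have hα1 : 0 < α - 1 := by linarith
  have hH := conj_posDef (mpow_posDef hZ (α - 1)) (mpow_posDef hσ s)
  refine ⟨_, hH, ?_⟩
  have hW : mpow σ (p / 2) * (mpow σ s * mpow Z (α - 1) * mpow σ s) * mpow σ (p / 2) =
      mpow Z (α - 1) := by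
    calc _ = (mpow σ (p / 2) * mpow σ s) * mpow Z (α - 1) * (mpow σ s * mpow σ (p / 2)) := by
          simp only [Matrix.mul_assoc]
      _ = _ := by rw [h1, h2, Matrix.one_mul, Matrix.mul_one]
  rw [Gf_eq p hH hσ, hW, mpow_mpow hZ, ← trace_WZ (σ := σ) h1 h2, hW, ← hZdef]
  have e1 : mpow Z (α - 1) * Z = mpow Z α := by
    conv_lhs => enter [2]; rw [← mpow_one hZ]
    rw [mpow_mul hZ, sub_add_cancel]
  have e2 : (α - 1) * (1 / p) = α := by
    rw [hp]
    field_simp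
  rw [e1, e2]
  ring

end helpers

theorem Q_jointly_convex {n : ℕ} (α : ℝ) (hα : 1 < α)
    (ρ₀ ρ₁ σ₀ σ₁ : Matrix (Fin n) (Fin n) ℂ)
    (hρ₀ : ρ₀.PosDef) (hρ₁ : ρ₁.PosDef) (hσ₀ : σ₀.PosDef) (hσ₁ : σ₁.PosDef)
    (t : ℝ) (ht0 : 0 ≤ t) (ht1 : t ≤ 1) :
    (fun (ρ σ : Matrix (Fin n) (Fin n) ℂ) =>
      (mpow (mpow σ ((1 - α) / (2 * α)) * ρ * mpow σ ((1 - α) / (2 * α))) α).trace.re)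
        (((1 - t : ℝ) : ℂ) • ρ₀ + ((t : ℝ) : ℂ) • ρ₁)
        (((1 - t : ℝ) : ℂ) • σ₀ + ((t : ℝ) : ℂ) • σ₁) ≤
      (1 - t) * (fun (ρ σ : Matrix (Fin n) (Fin n) ℂ) =>
      (mpow (mpow σ ((1 - α) / (2 * α)) * ρ * mpow σ ((1 - α) / (2 * α))) α).trace.re) ρ₀ σ₀ + t * (fun (ρ σ : Matrix (Fin n) (Fin n) ℂ) =>
      (mpow (mpow σ ((1 - α) / (2 * α)) * ρ * mpow σ ((1 - α) / (2 * α))) α).trace.re) ρ₁ σ₁ := by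
  beta_reduce
  have hs : (1 - α) / (2 * α) = -(((α - 1) / α) / 2) := by
    field_simp
    ring
  have hα0 : 0 < α := by linarith
  have hρ := comb_posDef hρ₀ hρ₁ ht0 ht1
  have hσ := comb_posDef hσ₀ hσ₁ ht0 ht1
  have hp : (α - 1) / α ∈ Set.Ioo (0 : ℝ) 1 := by
    refine ⟨div_pos (by linarith) hα0, ?_⟩
    rw [div_lt_one hα0]
    linarith
  obtain ⟨H, hH, he⟩ := var_eq hα rfl hs hρ hσ
  rw [← he]
  have e0 := mul_le_mul_of_nonneg_left (var_le hα rfl hs hρ₀ hσ₀ hH) (sub_nonneg.2 ht1)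
  have e1 := mul_le_mul_of_nonneg_left (var_le hα rfl hs hρ₁ hσ₁ hH) ht0
  have hc := mul_le_mul_of_nonneg_left
    (Gf_concave hp hH hσ₀ hσ₁ hσ ht0 ht1 rfl) (sub_nonneg.2 hα.le)
  refine le_trans ?_ (add_le_add e0 e1)
  simp only [Matrix.mul_add, Matrix.mul_smul, Matrix.trace_add,
    Matrix.trace_smul, smul_eq_mul, Complex.add_re, Complex.re_ofReal_mul] at hc ⊢
  linarith
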